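/- Let K ⊆ L be a commutative field extension with L ≠ K such that every element of L that is algebraic over K already lies in K (e.g. L purely transcendental over K). Then for all positive integers r, s, the minimum of dim_K⟨AB⟩, taken over all K-subspaces A, B of L with dim_K A = r and dim_K B = s, equals r + s − 1. -/

import Mathlib

/-!
The lower bound is a linear Cauchy–Davenport theorem, proved by the linear analogue of Dyson's
`e`-transform. Let every element of `L` outside `K` have degree at least `p` over `K`, and rescale
`B` so that `1 ∈ B`. If `AB ⊆ A`, then every `x ∈ B` acts on `A`, so the degree of `x` is at most
`dim A`; hence either `B = K` or `dim A ≥ p`. Otherwise `ab ∉ A` for some `a ∈ A` and `b ∈ B`, and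
replacing `(A, B)` by `(A + aB, B ∩ a⁻¹A)` preserves `dim A + dim B`, does not enlarge `⟨AB⟩`, and
strictly shrinks `B` while keeping `1 ∈ B`.

Equality is attained by geometric progressions `A = ⟨1, x, …, x ^ (r - 1)⟩` and
`B = ⟨1, x, …, x ^ (s - 1)⟩` with `x ∉ K`.
-/

open Module Submodule
open scoped Pointwise

section ETransform

instance finite_smul_submodule {M K V : Type*} [Monoid M] [Ring K] [AddCommGroup V]
    [DistribMulAction M V] [Module K V] [SMulCommClass M K V] (m : M) (W : Submodule K V)
    [Module.Finite K W] : Module.Finite K ↥(m • W) :=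
  Module.Finite.map W (DistribSMul.toLinearMap K V m)

variable {G V : Type*} [GroupWithZero G] [AddCommGroup V] [DistribMulAction G V]

section Module

variable {K : Type*} [Ring K] [Module K V] [SMulCommClass G K V] {g : G}

theorem mem_inv_smul_submodule_iff (hg : g ≠ 0) {W : Submodule K V} {v : V} :
    v ∈ g⁻¹ • W ↔ g • v ∈ W :=
  Set.mem_inv_smul_set_iff₀ hg (W : Set V) v

theorem finrank_smul_submodule (hg : g ≠ 0) (W : Submodule K V) :
    finrank K ↥(g • W) = finrank K W :=
  (DistribMulAction.toLinearEquiv K V (Units.mk0 g hg)).finrank_map_eq W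

end Module

theorem finrank_sup_smul_add_finrank_inf_inv_smul {K : Type*} [DivisionRing K] [Module K V]
    [SMulCommClass G K V] {g : G} (hg : g ≠ 0) (A B : Submodule K V)
    [FiniteDimensional K A] [FiniteDimensional K B] :
    finrank K ↥(A ⊔ g • B) + finrank K ↥(B ⊓ g⁻¹ • A) = finrank K A + finrank K B := by
  have hinf : g • (B ⊓ g⁻¹ • A) = A ⊓ g • B := by
    apply SetLike.coe_injective
    simp [Set.smul_set_inter₀ hg, smul_inv_smul₀ hg, Set.inter_comm]
  rw [← finrank_smul_submodule hg (B ⊓ g⁻¹ • A), hinf, finrank_sup_add_finrank_inf_eq,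
    finrank_smul_submodule hg]

theorem sup_smul_mul_inf_inv_smul_le {R L : Type*} [CommSemiring R] [Semifield L]
    [Algebra R L] {e : L} (he : e ≠ 0) (A B : Submodule R L) :
    (A ⊔ e • B) * (B ⊓ e⁻¹ • A) ≤ A * B := by
  rw [Submodule.sup_mul]
  refine sup_le (mul_le_mul' le_rfl inf_le_left) ?_
  calc e • B * (B ⊓ e⁻¹ • A)
      ≤ e • B * e⁻¹ • A := mul_le_mul' le_rfl inf_le_right
    _ = A * B := by rw [smul_mul_assoc, mul_smul_comm, smul_inv_smul₀ he, mul_comm]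

end ETransform

section Powers

theorem linearIndependent_pow_of_transcendental {R A : Type*} [CommRing R] [Ring A] [Algebra R A]
    {x : A} (hx : Transcendental R x) : LinearIndependent R fun i : ℕ => x ^ i := by
  simpa [Function.comp_def] using (Polynomial.basisMonomials R).linearIndependent.map'
    (Polynomial.aeval x).toLinearMap
    (LinearMap.ker_eq_bot.2 (transcendental_iff_injective.1 hx))

theorem linearIndependent_pow_of_le_natDegree_minpoly {K A : Type*} [Field K] [Ring A]
    [Algebra K A] {x : A} {n : ℕ} (hn : IsAlgebraic K x → n ≤ (minpoly K x).natDegree) :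
    LinearIndependent K fun i : Fin n => x ^ (i : ℕ) := by
  by_cases hx : IsAlgebraic K x
  · exact (linearIndependent_pow x).comp _ (Fin.castLE_injective (hn hx))
  · exact (linearIndependent_pow_of_transcendental hx).comp _ Fin.val_injective

theorem le_finrank_of_linearIndependent_pow_of_mul_mem {K L : Type*} [Field K] [Ring L]
    [NoZeroDivisors L] [Algebra K L] {A : Submodule K L} [FiniteDimensional K A] (hA : A ≠ ⊥)
    {x : L} (hxA : ∀ a ∈ A, x * a ∈ A) {n : ℕ}
    (hx : LinearIndependent K fun i : Fin n => x ^ (i : ℕ)) : n ≤ finrank K A := by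
  obtain ⟨a, ha, ha0⟩ := exists_mem_ne_zero_of_ne_bot hA
  have hmem (i : ℕ) : x ^ i * a ∈ A := by
    induction i with
    | zero => simpa using ha
    | succ i ih => simpa [pow_succ', mul_assoc] using hxA _ ih
  have hli : LinearIndependent K fun i : Fin n => (⟨x ^ (i : ℕ) * a, hmem i⟩ : A) :=
    .of_comp A.subtype (hx.map' (LinearMap.mulRight K a)
      (LinearMap.ker_eq_bot.2 (mul_left_injective₀ ha0)))
  simpa using hli.fintype_card_le_finrank

/-- The span `⟨1, x, …, x ^ (n - 1)⟩` of a geometric progression of length `n`. -/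
def powSpan (R : Type*) {A : Type*} [CommSemiring R] [Semiring A] [Algebra R A] (x : A) (n : ℕ) :
    Submodule R A :=
  span R (Set.range fun i : Fin n => x ^ (i : ℕ))

theorem finrank_powSpan {K A : Type*} [Field K] [Ring A] [Algebra K A] {x : A} {n : ℕ}
    (hn : IsAlgebraic K x → n ≤ (minpoly K x).natDegree) : finrank K (powSpan K x n) = n :=
  (finrank_span_eq_card (linearIndependent_pow_of_le_natDegree_minpoly hn)).trans
    (Fintype.card_fin n)

theorem powSpan_mul_powSpan_le {R A : Type*} [CommSemiring R] [Semiring A] [Algebra R A]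
    (x : A) (m n : ℕ) : powSpan R x m * powSpan R x n ≤ powSpan R x (m + n - 1) := by
  rw [powSpan, powSpan, span_mul_span, span_le]
  rintro _ ⟨_, ⟨i, rfl⟩, _, ⟨j, rfl⟩, rfl⟩
  exact subset_span ⟨⟨i + j, by lia⟩, pow_add x i j⟩

theorem finrank_powSpan_mul_powSpan_le {K A : Type*} [Field K] [Ring A] [Algebra K A]
    (x : A) (m n : ℕ) : finrank K ↥(powSpan K x m * powSpan K x n) ≤ m + n - 1 := by
  have hfin : FiniteDimensional K (powSpan K x (m + n - 1)) :=
    FiniteDimensional.span_of_finite K (Set.finite_range _)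
  calc finrank K ↥(powSpan K x m * powSpan K x n)
      ≤ finrank K (powSpan K x (m + n - 1)) := finrank_mono (powSpan_mul_powSpan_le x m n)
    _ ≤ Fintype.card (Fin (m + n - 1)) := finrank_range_le_card _
    _ = m + n - 1 := Fintype.card_fin _

end Powers

section CauchyDavenport

variable {K L : Type*} [Field K] [Field L] [Algebra K L] {p : ℕ}

theorem min_le_finrank_of_mul_le_left
    (hp : ∀ x : L, IsAlgebraic K x → (minpoly K x).natDegree < p → x ∈ Set.range (algebraMap K L))
    {A B : Submodule K L} [FiniteDimensional K A] (hA : A ≠ ⊥) (hAB : A * B ≤ A) :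
    min p (finrank K A + finrank K B - 1) ≤ finrank K A := by
  by_cases hB : B ≤ 1
  · have hB1 : finrank K B ≤ 1 := by
      rw [one_eq_span] at hB
      exact (finrank_mono hB).trans (finrank_span_singleton one_ne_zero).le
    lia
  · obtain ⟨x, hxB, hx⟩ := SetLike.not_le_iff_exists.1 hB
    refine min_le_of_left_le (le_finrank_of_linearIndependent_pow_of_mul_mem hA (x := x) ?_ ?_)
    · intro a ha
      rw [mul_comm]
      exact hAB (mul_mem_mul ha hxB)
    · refine linearIndependent_pow_of_le_natDegree_minpoly fun halg => ?_
      by_contra! hdeg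
      exact hx (mem_one.2 (hp x halg hdeg))

theorem linear_cauchy_davenport_of_one_mem
    (hp : ∀ x : L, IsAlgebraic K x → (minpoly K x).natDegree < p → x ∈ Set.range (algebraMap K L))
    {A B : Submodule K L} [FiniteDimensional K A] [FiniteDimensional K B]
    (hA : A ≠ ⊥) (hB : 1 ∈ B) :
    min p (finrank K A + finrank K B - 1) ≤ finrank K ↥(A * B) := by
  induction hn : finrank K B using Nat.strong_induction_on generalizing A B with
  | _ n ih =>
  subst hn
  have hfin : FiniteDimensional K ↥(A * B) := Module.Finite.of_fg (.mul .of_finite .of_finite)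
  by_cases hAB : A * B ≤ A
  · have hle : A ≤ A * B := fun a ha => by simpa using mul_mem_mul ha hB
    exact (min_le_finrank_of_mul_le_left hp hA hAB).trans (finrank_mono hle)
  · obtain ⟨a, ha, b, hb, hab⟩ : ∃ a ∈ A, ∃ b ∈ B, a * b ∉ A := by
      simpa [Submodule.mul_le] using hAB
    have ha0 : a ≠ 0 := by
      rintro rfl
      simp at hab
    have hlt : B ⊓ a⁻¹ • A < B :=
      inf_lt_left.2 fun h => hab ((mem_inv_smul_submodule_iff ha0).1 (h hb))
    have hone : 1 ∈ B ⊓ a⁻¹ • A :=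
      ⟨hB, (mem_inv_smul_submodule_iff ha0).2 (by simpa using ha)⟩
    calc min p (finrank K A + finrank K B - 1)
        = min p (finrank K ↥(A ⊔ a • B) + finrank K ↥(B ⊓ a⁻¹ • A) - 1) := by
          rw [finrank_sup_smul_add_finrank_inf_inv_smul ha0]
      _ ≤ finrank K ↥((A ⊔ a • B) * (B ⊓ a⁻¹ • A)) :=
          ih _ (finrank_lt_finrank_of_lt hlt) (ne_bot_of_le_ne_bot hA le_sup_left) hone rfl
      _ ≤ finrank K ↥(A * B) := finrank_mono (sup_smul_mul_inf_inv_smul_le ha0 A B)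

/-- The number `p` is a lower bound for the degrees over `K` of the elements outside `K`; it plays
the role of the least order of a nontrivial element in the Cauchy–Davenport theorem for groups. -/
theorem linear_cauchy_davenport
    (hp : ∀ x : L, IsAlgebraic K x → (minpoly K x).natDegree < p → x ∈ Set.range (algebraMap K L))
    {A B : Submodule K L} [FiniteDimensional K A] [FiniteDimensional K B]
    (hA : A ≠ ⊥) (hB : B ≠ ⊥) :
    min p (finrank K A + finrank K B - 1) ≤ finrank K ↥(A * B) := by
  obtain ⟨b, hb, hb0⟩ := exists_mem_ne_zero_of_ne_bot hB
  have hone : 1 ∈ b⁻¹ • B := (mem_inv_smul_submodule_iff hb0).2 (by simpa using hb)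
  have hmul : A * b⁻¹ • B = b⁻¹ • (A * B) := mul_smul_comm b⁻¹ A B
  have h := linear_cauchy_davenport_of_one_mem hp hA hone
  rwa [hmul, finrank_smul_submodule (inv_ne_zero hb0),
    finrank_smul_submodule (inv_ne_zero hb0)] at h

end CauchyDavenport

theorem stmt_9_general (K L : Type*) [Field K] [Field L] [Algebra K L] (r s : ℕ)
    (hne : ∃ x : L, x ∉ Set.range (algebraMap K L))
    (hdeg : ∀ x : L, IsAlgebraic K x → (minpoly K x).natDegree < r + s - 1 →
      x ∈ Set.range (algebraMap K L))
    (hr : 0 < r) (hs : 0 < s) :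
    IsLeast {n : ℕ | ∃ A B : Submodule K L,
      finrank K A = r ∧ finrank K B = s ∧ finrank K ↥(A * B) = n} (r + s - 1) := by
  have lower_bound (A B : Submodule K L) (hA : finrank K A = r) (hB : finrank K B = s) :
      r + s - 1 ≤ finrank K ↥(A * B) := by
    subst hA hB
    have := finite_of_finrank_pos hr
    have := finite_of_finrank_pos hs
    have hA : A ≠ ⊥ := one_le_finrank_iff.1 hr
    have hB : B ≠ ⊥ := one_le_finrank_iff.1 hs
    simpa only [min_self] using linear_cauchy_davenport hdeg hA hB
  obtain ⟨x, hx⟩ := hne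
  have hdegx (hx_alg : IsAlgebraic K x) : r + s - 1 ≤ (minpoly K x).natDegree :=
    not_lt.1 (mt (hdeg x hx_alg) hx)
  have hr' : finrank K (powSpan K x r) = r :=
    finrank_powSpan fun hx_alg => le_trans (by lia) (hdegx hx_alg)
  have hs' : finrank K (powSpan K x s) = s :=
    finrank_powSpan fun hx_alg => le_trans (by lia) (hdegx hx_alg)
  refine ⟨⟨powSpan K x r, powSpan K x s, hr', hs', ?_⟩, ?_⟩
  · exact (finrank_powSpan_mul_powSpan_le x r s).antisymm (lower_bound _ _ hr' hs')
  · rintro _ ⟨A, B, hA, hB, rfl⟩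
    exact lower_bound A B hA hB

/-- Example 5.1 (purely transcendental-type extensions): if `L ≠ K` and every element of
`L` algebraic over `K` lies in `K`, then for all positive integers `r, s`, the minimum of
`dim_K ⟨AB⟩` over `K`-subspaces `A, B` of `L` with `dim_K A = r`, `dim_K B = s` equals
`r + s - 1`. -/
theorem stmt_9 (K L : Type*) [Field K] [Field L] [Algebra K L]
    (hne : ∃ x : L, x ∉ Set.range (algebraMap K L))
    (halg : ∀ x : L, IsAlgebraic K x → x ∈ Set.range (algebraMap K L))
    (r s : ℕ) (hr : 0 < r) (hs : 0 < s) :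
    sInf {n : ℕ | ∃ A B : Submodule K L,
        Module.finrank K A = r ∧ Module.finrank K B = s ∧ Module.finrank K ↥(A * B) = n}
      = r + s - 1 :=
  (stmt_9_general K L r s hne (fun x hx _ => halg x hx) hr hs).csInf_eq
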